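/- (Product perturbation bound for incoherent unit vectors.) Let d ≥ 1 and for each l ∈ [d] let a_l, b_l, c_l ∈ ℝ^{p_l} be unit vectors satisfying ‖a_l − b_l‖₂ ≤ δ and |⟨b_l, c_l⟩| ≤ η, where δ, η ≥ 0. Then |∏_{l=1}^d ⟨a_l, c_l⟩ − ∏_{l=1}^d ⟨b_l, c_l⟩| ≤ Σ_{m=1}^d C(d,m)·δ^m·η^{d−m} ≤ d·δ·(δ + η)^{d−1}, where C(d,m) is the binomial coefficient. -/

import Mathlib

/-!
By the binomial theorem the middle sum equals `(δ + η) ^ d - η ^ d`. With `x l = ⟪a l, c l⟫` and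
`y l = ⟪b l, c l⟫`, Cauchy–Schwarz and `‖c l‖ = 1` give `|x l - y l| ≤ δ`, while `|y l| ≤ η`.
Both inequalities are then statements about real numbers, proved by induction on the number of
factors: `abs_prod_sub_prod_le` telescopes the product one factor at a time, and
`add_pow_succ_sub_pow_le` is the mean value bound for `t ↦ t ^ d` on `[η, δ + η]`.
-/

open scoped BigOperators RealInnerProductSpace

noncomputable section

theorem abs_prod_sub_prod_le {ι : Type*} (s : Finset ι) (x y : ι → ℝ) {δ η : ℝ}
    (hδ : 0 ≤ δ) (hη : 0 ≤ η) (hxy : ∀ i, |x i - y i| ≤ δ) (hy : ∀ i, |y i| ≤ η) :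
    |(∏ i ∈ s, x i) - ∏ i ∈ s, y i| ≤ (δ + η) ^ s.card - η ^ s.card := by
  classical
  induction s using Finset.induction_on with
  | empty => simp
  | insert i s hi ih =>
    rw [Finset.prod_insert hi, Finset.prod_insert hi, Finset.card_insert_of_notMem hi]
    have hx : |x i| ≤ δ + η := by
      calc |x i| = |(x i - y i) + y i| := by ring_nf
        _ ≤ |x i - y i| + |y i| := abs_add_le _ _
        _ ≤ δ + η := add_le_add (hxy i) (hy i)
    have hprod : |∏ j ∈ s, y j| ≤ η ^ s.card := by
      rw [Finset.abs_prod]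
      exact (Finset.prod_le_prod (fun _ _ => abs_nonneg _) fun j _ => hy j).trans_eq (by simp)
    calc |x i * ∏ j ∈ s, x j - y i * ∏ j ∈ s, y j|
        = |x i * ((∏ j ∈ s, x j) - ∏ j ∈ s, y j) + (x i - y i) * ∏ j ∈ s, y j| := by ring_nf
      _ ≤ |x i| * |(∏ j ∈ s, x j) - ∏ j ∈ s, y j| + |x i - y i| * |∏ j ∈ s, y j| := by
        rw [← abs_mul, ← abs_mul]
        exact abs_add_le _ _
      _ ≤ (δ + η) * ((δ + η) ^ s.card - η ^ s.card) + δ * η ^ s.card := by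
        gcongr
        exact hxy i
      _ = (δ + η) ^ (s.card + 1) - η ^ (s.card + 1) := by ring

theorem add_pow_succ_sub_pow_le (n : ℕ) {δ η : ℝ} (hδ : 0 ≤ δ) (hη : 0 ≤ η) :
    (δ + η) ^ (n + 1) - η ^ (n + 1) ≤ ((n + 1 : ℕ) : ℝ) * δ * (δ + η) ^ n := by
  induction n with
  | zero => simp
  | succ n ih =>
    have hpow : η ^ (n + 1) ≤ (δ + η) ^ (n + 1) := by
      gcongr
      linarith
    calc (δ + η) ^ (n + 1 + 1) - η ^ (n + 1 + 1)
        = (δ + η) * ((δ + η) ^ (n + 1) - η ^ (n + 1)) + δ * η ^ (n + 1) := by ring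
      _ ≤ (δ + η) * (((n + 1 : ℕ) : ℝ) * δ * (δ + η) ^ n) + δ * (δ + η) ^ (n + 1) := by
        gcongr
      _ = ((n + 1 + 1 : ℕ) : ℝ) * δ * (δ + η) ^ (n + 1) := by
        push_cast
        ring

theorem sum_Icc_one_choose (d : ℕ) (δ η : ℝ) :
    ∑ m ∈ Finset.Icc 1 d, (d.choose m : ℝ) * δ ^ m * η ^ (d - m) = (δ + η) ^ d - η ^ d := by
  rw [add_pow, Finset.range_eq_Ico, Finset.sum_eq_sum_Ico_succ_bot (Nat.succ_pos d)]
  have hset : Finset.Ico (0 + 1) (d + 1) = Finset.Icc 1 d := by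
    ext m
    simp only [Finset.mem_Ico, Finset.mem_Icc]
    omega
  rw [hset]
  simp only [pow_zero, Nat.sub_zero, Nat.choose_zero_right, Nat.cast_one, one_mul, mul_one,
    add_sub_cancel_left]
  exact Finset.sum_congr rfl fun m _ => by ring

/-- product perturbation bound for incoherent unit vectors. -/
theorem statement14
    {d : ℕ} (hd : 1 ≤ d) {p : Fin d → ℕ}
    (a b c : (l : Fin d) → EuclideanSpace ℝ (Fin (p l)))
    (ha : ∀ l, ‖a l‖ = 1) (hb : ∀ l, ‖b l‖ = 1) (hc : ∀ l, ‖c l‖ = 1)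
    (δ η : ℝ) (hδ : 0 ≤ δ) (hη : 0 ≤ η)
    (hab : ∀ l, ‖a l - b l‖ ≤ δ) (hbc : ∀ l, |⟪b l, c l⟫| ≤ η) :
    |(∏ l, ⟪a l, c l⟫) - ∏ l, ⟪b l, c l⟫| ≤
        ∑ m ∈ Finset.Icc 1 d, (d.choose m : ℝ) * δ ^ m * η ^ (d - m) ∧
      ∑ m ∈ Finset.Icc 1 d, (d.choose m : ℝ) * δ ^ m * η ^ (d - m) ≤
        d * δ * (δ + η) ^ (d - 1) := by
  rw [sum_Icc_one_choose]
  constructor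
  · have hxy : ∀ l, |⟪a l, c l⟫ - ⟪b l, c l⟫| ≤ δ := fun l => by
      rw [← inner_sub_left]
      calc |⟪a l - b l, c l⟫| ≤ ‖a l - b l‖ * ‖c l‖ := abs_real_inner_le_norm _ _
        _ ≤ δ := by rw [hc l, mul_one]; exact hab l
    simpa using abs_prod_sub_prod_le Finset.univ (fun l => ⟪a l, c l⟫) (fun l => ⟪b l, c l⟫)
      hδ hη hxy hbc
  · have hle := add_pow_succ_sub_pow_le (d - 1) hδ hη
    rwa [Nat.sub_add_cancel hd] at hle
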